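/- Let F: ℝⁿ → ℝⁿ be strongly monotone with constant c_F > 0, let q: ℝⁿ → ℝˢ and l: ℝⁿ → ℝᵗ be affine maps with (constant) Jacobians Dq and Dl, and define H(h, λ, μ) := F(h) + Dqᵀλ + Dlᵀμ. Let (h*, λ*, μ*) ∈ ℝⁿ × ℝˢ × ℝᵗ be a KKT point, i.e., H(h*, λ*, μ*) = 0, l(h*) = 0, q(h*) ≤ 0 componentwise, λ* ≥ 0 componentwise, and (λ*)ᵀq(h*) = 0. Then for all h̄ ∈ ℝⁿ, all λ̄ ∈ ℝˢ with λ̄ ≥ 0 componentwise, and all μ̄ ∈ ℝᵗ, one has −2(h̄ − h*)ᵀ H(h̄, λ̄, μ̄) + 2(λ̄ − λ*)ᵀ [q(h̄)]_{λ̄}⁺ + 2(μ̄ − μ*)ᵀ l(h̄) ≤ −2 c_F ‖h̄ − h*‖². -/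

import Mathlib

open RealInnerProductSpace

/-!
Both the KKT conditions and the projected multiplier dynamics are statements about the normal
cones of the set `K` of admissible multipliers: complementarity says that `q h*` is normal to `K`
at `λ*`, and passing from `q h̄` to `[q h̄]_λ̄⁺` removes a vector normal to `K` at `λ̄`.
The multipliers enter the stationarity map through the adjoints of the constraint Jacobians, so
the terms coupling `h` to the multipliers cancel, up to inner products whose sign is given by the
two normal vectors. What is left is the strong monotonicity of `F`.
-/

section NormalCone

variable {E : Type*} [NormedAddCommGroup E] [InnerProductSpace ℝ E]

/-- The normal cone to a set `K` at a point `x`, in the sense of convex analysis. It expresses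
complementarity without coordinates. The point `x` is not required to lie in `K`. -/
def normalCone (K : Set E) (x : E) : Set E :=
  {v | ∀ y ∈ K, ⟪v, y - x⟫ ≤ 0}

theorem mem_normalCone_of_inner_eq_zero {K : Set E} {x v : E}
    (hv : ∀ y ∈ K, ⟪v, y⟫ ≤ 0) (hx : ⟪x, v⟫ = 0) : v ∈ normalCone K x := by
  intro y hy
  rw [inner_sub_right, real_inner_comm x v, hx, sub_zero]
  exact hv y hy

theorem inner_sub_le_inner_sub_of_mem_normalCone {K : Set E} {x x' v v' w : E}
    (hx : x ∈ K) (hx' : x' ∈ K) (hv : v - w ∈ normalCone K x) (hv' : v' ∈ normalCone K x') :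
    ⟪x - x', w⟫ ≤ ⟪x - x', v - v'⟫ := by
  have hnormal : ⟪v - w, x' - x⟫ ≤ 0 := hv x' hx'
  have hnormal' : ⟪v', x - x'⟫ ≤ 0 := hv' x hx
  have hsplit : ⟪x - x', v - v'⟫ - ⟪x - x', w⟫ = -⟪v - w, x' - x⟫ - ⟪v', x - x'⟫ := by
    rw [← inner_sub_right, sub_right_comm, inner_sub_right, ← inner_neg_right, neg_sub,
      real_inner_comm (v - w), real_inner_comm v']
  linarith

end NormalCone

section NonnegOrthant

/-- The nonnegative orthant of Euclidean space, the set of admissible multipliers of inequality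
constraints. -/
def nonnegOrthant (ι : Type*) : Set (EuclideanSpace ℝ ι) :=
  {x | ∀ i, 0 ≤ x i}

/-- The operator `[v]_x⁺`: the velocity `v` at the position `x` of the half-line `[0, ∞)`, cut off
so that the motion does not leave the half-line. All `x ≤ 0` are treated as the endpoint. -/
noncomputable def projectedVelocity (v x : ℝ) : ℝ :=
  if 0 < x then v else max v 0

theorem sub_projectedVelocity_mul_sub_nonpos (v : ℝ) {x y : ℝ} (hx : 0 ≤ x) (hy : 0 ≤ y) :
    (v - projectedVelocity v x) * (y - x) ≤ 0 := by
  rcases hx.eq_or_lt with rfl | hx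
  · simpa [projectedVelocity] using
      mul_nonpos_of_nonpos_of_nonneg (sub_nonpos.2 (le_max_left v 0)) hy
  · simp [projectedVelocity, hx]

variable {ι : Type*} [Fintype ι]

theorem inner_nonpos_of_mem_nonnegOrthant {x v : EuclideanSpace ℝ ι}
    (hv : ∀ i, v i ≤ 0) (hx : x ∈ nonnegOrthant ι) : ⟪v, x⟫ ≤ 0 := by
  rw [PiLp.inner_apply]
  exact Finset.sum_nonpos fun i _ ↦ mul_nonpos_of_nonneg_of_nonpos (hx i) (hv i)

theorem sub_mem_normalCone_nonnegOrthant {x v w : EuclideanSpace ℝ ι} (hx : x ∈ nonnegOrthant ι)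
    (hw : ∀ i, w i = projectedVelocity (v i) (x i)) :
    v - w ∈ normalCone (nonnegOrthant ι) x := by
  intro y hy
  rw [PiLp.inner_apply]
  refine Finset.sum_nonpos fun i _ ↦ ?_
  rw [real_inner_comm, PiLp.sub_apply, PiLp.sub_apply, hw]
  exact sub_projectedVelocity_mul_sub_nonpos (v i) (hx i) (hy i)

end NonnegOrthant

section KKT

variable {E Λ M : Type*}
  [NormedAddCommGroup E] [InnerProductSpace ℝ E] [CompleteSpace E]
  [NormedAddCommGroup Λ] [InnerProductSpace ℝ Λ] [CompleteSpace Λ]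
  [NormedAddCommGroup M] [InnerProductSpace ℝ M] [CompleteSpace M]

/-- The stationarity map `H` of the KKT system of `F`, for constraints with Jacobians `A` and `B`:
its zeros are the stationary triples of a point and two multipliers. If `F` is a gradient, it is
the gradient of the Lagrangian in the first variable. -/
noncomputable def kktMap (F : E → E) (A : E →L[ℝ] Λ) (B : E →L[ℝ] M)
    (x : E) (lam : Λ) (mu : M) : E :=
  F x + ContinuousLinearMap.adjoint A lam + ContinuousLinearMap.adjoint B mu

theorem inner_sub_kktMap_sub_kktMap (F : E → E) (A : E →L[ℝ] Λ) (B : E →L[ℝ] M)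
    (x x' : E) (lam lam' : Λ) (mu mu' : M) :
    ⟪x - x', kktMap F A B x lam mu - kktMap F A B x' lam' mu'⟫ =
      ⟪F x - F x', x - x'⟫ + ⟪lam - lam', A (x - x')⟫ + ⟪mu - mu', B (x - x')⟫ := by
  have hsub : kktMap F A B x lam mu - kktMap F A B x' lam' mu' =
      (F x - F x') + ContinuousLinearMap.adjoint A (lam - lam')
        + ContinuousLinearMap.adjoint B (mu - mu') := by
    simp only [kktMap, map_sub]
    abel
  rw [hsub, real_inner_comm, inner_add_left, inner_add_left,
    ContinuousLinearMap.adjoint_inner_left, ContinuousLinearMap.adjoint_inner_left]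

theorem multiplier_lie_derivative_neg_strong_general
    {F : E → E} {c : ℝ}
    {A : E →L[ℝ] Λ} {q : E → Λ} {q₀ : Λ} (hq : ∀ x, q x = A x + q₀)
    {B : E →L[ℝ] M} {l : E → M} {l₀ : M} (hl : ∀ x, l x = B x + l₀)
    (K : Set Λ) {xStar : E} {lamStar : Λ} {muStar : M}
    (hstat : kktMap F A B xStar lamStar muStar = 0) (hlStar : l xStar = 0)
    (hlamStar : lamStar ∈ K) (hqStar : q xStar ∈ normalCone K lamStar)
    {x : E} (hmono : c * ‖x - xStar‖ ^ 2 ≤ ⟪F x - F xStar, x - xStar⟫)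
    {lam : Λ} (hlam : lam ∈ K) (mu : M)
    {qPlus : Λ} (hqPlus : q x - qPlus ∈ normalCone K lam) :
    -2 * ⟪x - xStar, kktMap F A B x lam mu⟫ + 2 * ⟪lam - lamStar, qPlus⟫
      + 2 * ⟪mu - muStar, l x⟫ ≤ -2 * c * ‖x - xStar‖ ^ 2 := by
  have hA : A (x - xStar) = q x - q xStar := by rw [hq, hq, map_sub, add_sub_add_right_eq_sub]
  have hB : B (x - xStar) = l x := by
    rw [← sub_zero (l x), ← hlStar, hl, hl, map_sub, add_sub_add_right_eq_sub]
  have hcoupling := inner_sub_kktMap_sub_kktMap F A B x xStar lam lamStar mu muStar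
  rw [hstat, sub_zero, hA, hB] at hcoupling
  have hnormal : ⟪lam - lamStar, qPlus⟫ ≤ ⟪lam - lamStar, q x - q xStar⟫ :=
    inner_sub_le_inner_sub_of_mem_normalCone hlam hlamStar hqPlus hqStar
  linarith

end KKT

/-- Bound on the Lie derivative of the Lyapunov function in the
multiplier-driven algorithm analysis, under strong monotonicity: at a KKT
point `(h*, λ*, μ*)`, for all `h̄`, `λ̄ ≥ 0`, `μ̄`:
`-2⟪h̄ - h*, H(h̄, λ̄, μ̄)⟫ + 2⟪λ̄ - λ*, [q h̄]_{λ̄}⁺⟫ + 2⟪μ̄ - μ*, l h̄⟫ ≤ -2 c_F ‖h̄ - h*‖²`. -/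
theorem multiplier_lie_derivative_neg_strong {n s t : ℕ}
    (F : EuclideanSpace ℝ (Fin n) → EuclideanSpace ℝ (Fin n))
    (cF : ℝ) (hcF : 0 < cF)
    (hmono : ∀ x y, cF * ‖x - y‖ ^ 2 ≤ ⟪F x - F y, x - y⟫)
    (Dq : EuclideanSpace ℝ (Fin n) →L[ℝ] EuclideanSpace ℝ (Fin s))
    (q0 : EuclideanSpace ℝ (Fin s))
    (Dl : EuclideanSpace ℝ (Fin n) →L[ℝ] EuclideanSpace ℝ (Fin t))
    (l0 : EuclideanSpace ℝ (Fin t))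
    (q : EuclideanSpace ℝ (Fin n) → EuclideanSpace ℝ (Fin s))
    (hq : ∀ h, q h = Dq h + q0)
    (l : EuclideanSpace ℝ (Fin n) → EuclideanSpace ℝ (Fin t))
    (hl : ∀ h, l h = Dl h + l0)
    (H : EuclideanSpace ℝ (Fin n) → EuclideanSpace ℝ (Fin s) →
      EuclideanSpace ℝ (Fin t) → EuclideanSpace ℝ (Fin n))
    (hH : ∀ h lam mu, H h lam mu =
      F h + ContinuousLinearMap.adjoint Dq lam + ContinuousLinearMap.adjoint Dl mu)
    (hstar : EuclideanSpace ℝ (Fin n)) (lamStar : EuclideanSpace ℝ (Fin s))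
    (muStar : EuclideanSpace ℝ (Fin t))
    (hstat : H hstar lamStar muStar = 0)
    (hl0 : l hstar = 0)
    (hq0 : ∀ j, q hstar j ≤ 0)
    (hlamStar : ∀ j, 0 ≤ lamStar j)
    (hcomp : ⟪lamStar, q hstar⟫ = 0)
    (hbar : EuclideanSpace ℝ (Fin n))
    (lamBar : EuclideanSpace ℝ (Fin s)) (hlamBar : ∀ j, 0 ≤ lamBar j)
    (muBar : EuclideanSpace ℝ (Fin t))
    (qplus : EuclideanSpace ℝ (Fin s))
    (hqplus : ∀ j, qplus j = if 0 < lamBar j then q hbar j else max (q hbar j) 0) :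
    -2 * ⟪hbar - hstar, H hbar lamBar muBar⟫
      + 2 * ⟪lamBar - lamStar, qplus⟫ + 2 * ⟪muBar - muStar, l hbar⟫
      ≤ -2 * cF * ‖hbar - hstar‖ ^ 2 := by
  obtain rfl : H = kktMap F Dq Dl := funext₃ hH
  exact multiplier_lie_derivative_neg_strong_general hq hl (nonnegOrthant (Fin s)) hstat hl0
    hlamStar
    (mem_normalCone_of_inner_eq_zero (fun _ ↦ inner_nonpos_of_mem_nonnegOrthant hq0) hcomp)
    (hmono hbar hstar) hlamBar muBar (sub_mem_normalCone_nonnegOrthant hlamBar hqplus)
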